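/- Let α > 0, p ∈ [0,1] and n ≥ 2 an integer, and define the measure μ_n = (1−p)^n δ_0 + n p (1−p)^{n−1} δ_1 + λ_n, where λ_n is the measure on (1,∞) with density α p² n (n−1) t^{−2α−1} (1 − p t^{−α})^{n−2}. Then μ_n is a probability measure on [0,∞) and for every t ≥ 0, ∫_{[0,∞)} (1 − (ut)^α)_+ μ_n(du) = ( p(1 − t^α)_+ + 1 − p )^n, where (r)_+ = max(r,0). (Hence μ_n is the n-fold Kendall convolution power (p δ_1 + (1−p) δ_0)^{△_α n}.) -/

import Mathlib

open MeasureTheory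
open Set

/-!
Put `φ(x) = (1 - p x) ^ n`, so that the claimed transform is `φ(min (t ^ α) 1)`. Taylor's formula at
the point `1` with integral remainder reads
`φ(x) = φ(1) - φ'(1) (1 - x) + ∫ y in (0, 1), (y - x)_+ φ''(y)` for `x` in `[0, 1]`. The first two
terms are the transforms of atoms at `0` and `1`, and since
`u ^ (-α) (1 - (u t) ^ α)_+ = (u ^ (-α) - t ^ α)_+`, the substitution `y = u ^ (-α)` turns the
remainder into the transform of the density `α u ^ (-2 α - 1) φ''(u ^ (-α))` on `(1, ∞)`. The total
mass is the value `φ(0) = 1` of the transform at `t = 0`.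
-/

section Taylor

variable {a b x : ℝ} {f f' f'' : ℝ → ℝ}

lemma setIntegral_Ioo_max_sub_mul_deriv_deriv (hx : x ∈ Icc a b) (hf : ContinuousOn f (Icc a b))
    (hf' : ContinuousOn f' (Icc a b)) (hff' : ∀ y ∈ Ioo a b, HasDerivAt f (f' y) y)
    (hf'f'' : ∀ y ∈ Ioo a b, HasDerivAt f' (f'' y) y) (hf'' : IntegrableOn f'' (Ioo a b)) :
    ∫ y in Ioo a b, max (y - x) 0 * f'' y = f x - f b + (b - x) * f' b := by
  have hIcc : Icc x b ⊆ Icc a b := Icc_subset_Icc_left hx.1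
  have hIoo : Ioo x b ⊆ Ioo a b := Ioo_subset_Ioo_left hx.1
  have hderiv : ∀ y ∈ Ioo x b,
      HasDerivAt (fun y ↦ (y - x) * f' y - f y) ((y - x) * f'' y) y := fun y hy ↦
    ((((hasDerivAt_id y).sub_const x).mul (hf'f'' y (hIoo hy))).sub
      (hff' y (hIoo hy))).congr_deriv (by simp)
  have hcont : ContinuousOn (fun y ↦ (y - x) * f' y - f y) (Icc x b) :=
    ((continuousOn_id.sub continuousOn_const).mul (hf'.mono hIcc)).sub (hf.mono hIcc)
  have hint : IntegrableOn (fun y ↦ (y - x) * f'' y) (Ioo x b) :=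
    (hf''.mono_set hIoo).continuousOn_mul_of_subset (by fun_prop) isCompact_Icc
      measurableSet_Ioo Ioo_subset_Icc_self
  calc ∫ y in Ioo a b, max (y - x) 0 * f'' y
      = ∫ y in Ioo x b, max (y - x) 0 * f'' y := by
        refine setIntegral_eq_of_subset_of_forall_sdiff_eq_zero measurableSet_Ioo hIoo ?_
        rintro y ⟨hy, hyx⟩
        have : y ≤ x := not_lt.1 fun h ↦ hyx ⟨h, hy.2⟩
        rw [max_eq_right (sub_nonpos.2 this), zero_mul]
    _ = ∫ y in Ioo x b, (y - x) * f'' y :=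
        setIntegral_congr_fun measurableSet_Ioo fun y hy ↦ by
          simp only [max_eq_left (sub_nonneg.2 hy.1.le)]
    _ = ∫ y in x..b, (y - x) * f'' y := by
        rw [intervalIntegral.integral_of_le hx.2, integral_Ioc_eq_integral_Ioo]
    _ = f x - f b + (b - x) * f' b := by
        rw [intervalIntegral.integral_eq_sub_of_hasDerivAt_of_le hx.2 hcont hderiv
          ((intervalIntegrable_iff_integrableOn_Ioo_of_le hx.2).2 hint)]
        ring

end Taylor

section Substitution

variable {E : Type*} [NormedAddCommGroup E] [NormedSpace ℝ E] {α : ℝ}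

lemma image_rpow_neg_Ioi_one (hα : 0 < α) : (fun u : ℝ ↦ u ^ (-α)) '' Ioi 1 = Ioo 0 1 := by
  refine Subset.antisymm (image_subset_iff.2 fun u hu ↦ ?_) fun y hy ↦ ?_
  · exact ⟨Real.rpow_pos_of_pos (one_pos.trans hu) _,
      Real.rpow_lt_one_of_one_lt_of_neg hu (neg_neg_of_pos hα)⟩
  · exact ⟨y ^ (-α)⁻¹,
      Real.one_lt_rpow_of_pos_of_lt_one_of_neg hy.1 hy.2 (inv_lt_zero.2 (neg_neg_of_pos hα)),
      Real.rpow_inv_rpow hy.1.le (neg_ne_zero.2 hα.ne')⟩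

lemma hasDerivWithinAt_rpow_neg_Ioi_one {u : ℝ} (hu : u ∈ Ioi 1) :
    HasDerivWithinAt (fun u : ℝ ↦ u ^ (-α)) (-(α * u ^ (-α - 1))) (Ioi 1) u :=
  ((Real.hasDerivAt_rpow_const (.inl (one_pos.trans hu).ne')).congr_deriv
    (by ring)).hasDerivWithinAt

lemma antitoneOn_rpow_neg_Ioi_one (hα : 0 ≤ α) : AntitoneOn (fun u : ℝ ↦ u ^ (-α)) (Ioi 1) :=
  (Real.antitoneOn_rpow_Ioi_of_exponent_nonpos (neg_nonpos.2 hα)).mono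
    (Ioi_subset_Ioi zero_le_one)

lemma integrableOn_Ioi_one_comp_rpow_neg_iff (hα : 0 < α) (g : ℝ → E) :
    IntegrableOn (fun u ↦ (α * u ^ (-α - 1)) • g (u ^ (-α))) (Ioi 1) ↔
      IntegrableOn g (Ioo 0 1) := by
  rw [← image_rpow_neg_Ioi_one hα, integrableOn_image_iff_integrableOn_deriv_smul_of_antitoneOn
    measurableSet_Ioi (fun _ ↦ hasDerivWithinAt_rpow_neg_Ioi_one)
    (antitoneOn_rpow_neg_Ioi_one hα.le)]
  simp only [neg_neg]

lemma setIntegral_Ioi_one_comp_rpow_neg (hα : 0 < α) (g : ℝ → E) :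
    ∫ u in Ioi 1, (α * u ^ (-α - 1)) • g (u ^ (-α)) = ∫ y in Ioo 0 1, g y := by
  rw [← image_rpow_neg_Ioi_one hα, integral_image_eq_integral_deriv_smul_of_antitoneOn
    measurableSet_Ioi (fun _ ↦ hasDerivWithinAt_rpow_neg_Ioi_one)
    (antitoneOn_rpow_neg_Ioi_one hα.le)]
  simp only [neg_neg]

end Substitution

section WithDensity

variable {X : Type*} {E : Type*} [MeasurableSpace X] {μ : Measure X} [NormedAddCommGroup E]
  [NormedSpace ℝ E] {d : X → ℝ}

lemma integrable_withDensity_ofReal_iff (hd : AEMeasurable d μ) (hd0 : 0 ≤ᵐ[μ] d) (g : X → E) :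
    Integrable g (μ.withDensity fun x ↦ ENNReal.ofReal (d x)) ↔
      Integrable (fun x ↦ d x • g x) μ := by
  rw [integrable_withDensity_iff_integrable_smul₀' hd.ennreal_ofReal
    (.of_forall fun _ ↦ ENNReal.ofReal_lt_top)]
  refine integrable_congr (hd0.mono fun x hx ↦ ?_)
  simp only [ENNReal.toReal_ofReal hx]

lemma integral_withDensity_ofReal (hd : AEMeasurable d μ) (hd0 : 0 ≤ᵐ[μ] d) (g : X → E) :
    ∫ x, g x ∂(μ.withDensity fun x ↦ ENNReal.ofReal (d x)) = ∫ x, d x • g x ∂μ := by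
  rw [integral_withDensity_eq_integral_toReal_smul₀ hd.ennreal_ofReal
    (.of_forall fun _ ↦ ENNReal.ofReal_lt_top)]
  refine integral_congr_ae (hd0.mono fun x hx ↦ ?_)
  simp only [ENNReal.toReal_ofReal hx]

end WithDensity

/-- The Kendall transform of `δ_u` at `t`, that is `h(δ_{ut})`. -/
noncomputable def kendallKernel (α t u : ℝ) : ℝ :=
  max (1 - (u * t) ^ α) 0

/-- The Kendall transform `t ↦ ∫ (1 - (ut)^α)_+ μ(du)` of a measure `μ` carried by `[0, ∞)`;
it turns the convolution `△_α` into multiplication. -/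
noncomputable def kendallTransform (α : ℝ) (μ : Measure ℝ) (t : ℝ) : ℝ :=
  ∫ u, kendallKernel α t u ∂μ

/-- Convex, decreasing, nonnegative functions `φ` on `[0, 1]`, the data from which `kendallInverse`
builds a measure. The derivatives `φ'` and `φ''` are passed as arguments because `φ` need not be
differentiable on both sides of the end points, where only the continuous extension of `φ'` is
used. -/
structure IsWilliamsonGenerator (φ φ' φ'' : ℝ → ℝ) : Prop where
  continuousOn : ContinuousOn φ (Icc 0 1)
  continuousOn_deriv : ContinuousOn φ' (Icc 0 1)
  hasDerivAt : ∀ x ∈ Ioo 0 1, HasDerivAt φ (φ' x) x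
  hasDerivAt_deriv : ∀ x ∈ Ioo 0 1, HasDerivAt φ' (φ'' x) x
  deriv_deriv_nonneg : ∀ x ∈ Ioo 0 1, 0 ≤ φ'' x
  deriv_apply_one_nonpos : φ' 1 ≤ 0
  apply_one_nonneg : 0 ≤ φ 1

/-- The density on `(1, ∞)` of the absolutely continuous part of `kendallInverse`, with `w = φ''`:
the image of the density `y ↦ y * w y` on `(0, 1)` under `y = u ^ (-α)`. -/
noncomputable def kendallDensity (α : ℝ) (w : ℝ → ℝ) (u : ℝ) : ℝ :=
  α * u ^ (-(2 * α) - 1) * w (u ^ (-α))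

/-- The inverse Kendall transform of `t ↦ φ(min (t^α) 1)`, for a generator `φ` with derivatives
`φ'` and `φ''`. -/
noncomputable def kendallInverse (α : ℝ) (φ φ' φ'' : ℝ → ℝ) : Measure ℝ :=
  ENNReal.ofReal (φ 1) • Measure.dirac 0 + ENNReal.ofReal (-φ' 1) • Measure.dirac 1
    + (volume.restrict (Ioi 1)).withDensity fun u ↦ ENNReal.ofReal (kendallDensity α φ'' u)

section Kernel

variable {α t u : ℝ}

lemma kendallKernel_zero_left (hα : α ≠ 0) : kendallKernel α 0 u = 1 := by
  simp [kendallKernel, Real.zero_rpow hα]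

lemma kendallKernel_zero_right (hα : α ≠ 0) : kendallKernel α t 0 = 1 := by
  simp [kendallKernel, Real.zero_rpow hα]

lemma kendallKernel_one_right : kendallKernel α t 1 = 1 - min (t ^ α) 1 := by
  rw [kendallKernel, one_mul, ← max_sub_sub_left, sub_self]

lemma kendallTransform_zero (hα : α ≠ 0) (μ : Measure ℝ) :
    kendallTransform α μ 0 = μ.real univ := by
  simp [kendallTransform, kendallKernel_zero_left hα]

lemma rpow_neg_mul_kendallKernel (ht : 0 ≤ t) (hu : 0 < u) :
    u ^ (-α) * kendallKernel α t u = max (u ^ (-α) - t ^ α) 0 := by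
  have hcancel : u ^ (-α) * u ^ α = 1 := by rw [← Real.rpow_add hu, neg_add_cancel, Real.rpow_zero]
  rw [kendallKernel, mul_max_of_nonneg _ _ (by positivity), mul_zero, mul_sub, mul_one,
    Real.mul_rpow hu.le ht, ← mul_assoc, hcancel, one_mul]

lemma kendallDensity_mul_kendallKernel (w : ℝ → ℝ) (ht : 0 ≤ t) (hu : 0 < u) :
    kendallDensity α w u * kendallKernel α t u
      = (α * u ^ (-α - 1)) • (max (u ^ (-α) - t ^ α) 0 * w (u ^ (-α))) := by
  have hsplit : u ^ (-(2 * α) - 1) = u ^ (-α - 1) * u ^ (-α) := by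
    rw [← Real.rpow_add hu]
    ring_nf
  rw [← rpow_neg_mul_kendallKernel ht hu, kendallDensity, hsplit, smul_eq_mul]
  ring

end Kernel

section Density

variable {α t : ℝ} {w : ℝ → ℝ}

lemma integrableOn_kendallDensity_mul_kendallKernel (hα : 0 < α) (hw : IntegrableOn w (Ioo 0 1))
    (ht : 0 ≤ t) :
    IntegrableOn (fun u ↦ kendallDensity α w u * kendallKernel α t u) (Ioi 1) := by
  refine (integrableOn_congr_fun (fun u (hu : 1 < u) ↦
    kendallDensity_mul_kendallKernel w ht (one_pos.trans hu)) measurableSet_Ioi).2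
    ((integrableOn_Ioi_one_comp_rpow_neg_iff hα fun y ↦ max (y - t ^ α) 0 * w y).2 ?_)
  exact hw.continuousOn_mul_of_subset (by fun_prop) isCompact_Icc measurableSet_Ioo
    Ioo_subset_Icc_self

lemma setIntegral_kendallDensity_mul_kendallKernel (hα : 0 < α) (w : ℝ → ℝ) (ht : 0 ≤ t) :
    ∫ u in Ioi 1, kendallDensity α w u * kendallKernel α t u
      = ∫ y in Ioo 0 1, max (y - min (t ^ α) 1) 0 * w y := by
  rw [setIntegral_congr_fun measurableSet_Ioi fun u (hu : 1 < u) ↦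
    kendallDensity_mul_kendallKernel w ht (one_pos.trans hu),
    setIntegral_Ioi_one_comp_rpow_neg hα fun y ↦ max (y - t ^ α) 0 * w y]
  refine setIntegral_congr_fun measurableSet_Ioo fun y hy ↦ ?_
  have hmax : max (y - min (t ^ α) 1) 0 = max (y - t ^ α) 0 := by
    rw [← max_sub_sub_left, max_assoc, max_eq_right (sub_nonpos.2 hy.2.le)]
  simp only [hmax]

lemma integrableOn_kendallDensity (hα : 0 < α) (hw : IntegrableOn w (Ioo 0 1)) :
    IntegrableOn (kendallDensity α w) (Ioi 1) := by
  simpa only [kendallKernel_zero_left hα.ne', mul_one] using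
    integrableOn_kendallDensity_mul_kendallKernel hα hw le_rfl

lemma kendallDensity_nonneg (hα : 0 < α) (hw : ∀ y ∈ Ioo 0 1, 0 ≤ w y) {u : ℝ} (hu : u ∈ Ioi 1) :
    0 ≤ kendallDensity α w u := by
  have hu0 : 0 < u := one_pos.trans hu
  have := hw _ (image_rpow_neg_Ioi_one hα ▸ mem_image_of_mem _ hu)
  unfold kendallDensity
  positivity

end Density

section Inversion

variable {α t : ℝ} {φ φ' φ'' : ℝ → ℝ}

lemma IsWilliamsonGenerator.integrableOn_deriv_deriv (hφ : IsWilliamsonGenerator φ φ' φ'') :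
    IntegrableOn φ'' (Ioo 0 1) :=
  (intervalIntegral.integrableOn_deriv_of_nonneg hφ.continuousOn_deriv hφ.hasDerivAt_deriv
    hφ.deriv_deriv_nonneg).mono_set Ioo_subset_Ioc_self

lemma kendallTransform_kendallInverse_eq_add (hα : 0 < α) (hφ : IsWilliamsonGenerator φ φ' φ'')
    (ht : 0 ≤ t) :
    kendallTransform α (kendallInverse α φ φ' φ'') t
      = φ 1 * kendallKernel α t 0 + -φ' 1 * kendallKernel α t 1
        + ∫ u in Ioi 1, kendallDensity α φ'' u * kendallKernel α t u := by
  have hdens : AEMeasurable (kendallDensity α φ'') (volume.restrict (Ioi 1)) :=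
    (integrableOn_kendallDensity hα hφ.integrableOn_deriv_deriv).aemeasurable
  have hdens0 : 0 ≤ᵐ[volume.restrict (Ioi 1)] kendallDensity α φ'' :=
    ae_restrict_of_forall_mem measurableSet_Ioi fun _ ↦
      kendallDensity_nonneg hα hφ.deriv_deriv_nonneg
  have hatom (c x : ℝ) : Integrable (kendallKernel α t) (ENNReal.ofReal c • Measure.dirac x) :=
    (integrable_dirac enorm_lt_top).smul_measure ENNReal.ofReal_ne_top
  have hcont : Integrable (kendallKernel α t) ((volume.restrict (Ioi 1)).withDensity
      fun u ↦ ENNReal.ofReal (kendallDensity α φ'' u)) :=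
    (integrable_withDensity_ofReal_iff hdens hdens0 _).2
      (integrableOn_kendallDensity_mul_kendallKernel hα hφ.integrableOn_deriv_deriv ht)
  rw [kendallTransform, kendallInverse,
    integral_add_measure ((hatom _ _).add_measure (hatom _ _)) hcont,
    integral_add_measure (hatom _ _) (hatom _ _), integral_smul_measure, integral_smul_measure,
    integral_dirac, integral_dirac, ENNReal.toReal_ofReal hφ.apply_one_nonneg,
    ENNReal.toReal_ofReal (neg_nonneg.2 hφ.deriv_apply_one_nonpos),
    integral_withDensity_ofReal hdens hdens0]
  simp only [smul_eq_mul]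

theorem kendallTransform_kendallInverse (hα : 0 < α) (hφ : IsWilliamsonGenerator φ φ' φ'')
    (ht : 0 ≤ t) : kendallTransform α (kendallInverse α φ φ' φ'') t = φ (min (t ^ α) 1) := by
  have hx : min (t ^ α) 1 ∈ Icc 0 1 := ⟨by positivity, min_le_right _ _⟩
  rw [kendallTransform_kendallInverse_eq_add hα hφ ht, kendallKernel_zero_right hα.ne',
    kendallKernel_one_right, setIntegral_kendallDensity_mul_kendallKernel hα φ'' ht,
    setIntegral_Ioo_max_sub_mul_deriv_deriv hx hφ.continuousOn hφ.continuousOn_deriv hφ.hasDerivAt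
      hφ.hasDerivAt_deriv hφ.integrableOn_deriv_deriv]
  ring

theorem isProbabilityMeasure_kendallInverse (hα : 0 < α) (hφ : IsWilliamsonGenerator φ φ' φ'')
    (hφ0 : φ 0 = 1) : IsProbabilityMeasure (kendallInverse α φ φ' φ'') := by
  rw [isProbabilityMeasure_iff_real, ← kendallTransform_zero hα.ne',
    kendallTransform_kendallInverse hα hφ le_rfl, Real.zero_rpow hα.ne',
    min_eq_left zero_le_one, hφ0]

end Inversion

section Bernoulli

lemma hasDerivAt_one_sub_mul_pow (p x : ℝ) (n : ℕ) :
    HasDerivAt (fun x ↦ (1 - p * x) ^ n) (-(n * p * (1 - p * x) ^ (n - 1))) x :=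
  ((((hasDerivAt_id x).const_mul p).const_sub 1).pow n).congr_deriv (by simp only [id]; ring)

lemma hasDerivAt_neg_mul_one_sub_mul_pow (p x : ℝ) {n : ℕ} (hn : 1 ≤ n) :
    HasDerivAt (fun x ↦ -(n * p * (1 - p * x) ^ (n - 1)))
      (p ^ 2 * n * (n - 1) * (1 - p * x) ^ (n - 2)) x :=
  ((hasDerivAt_one_sub_mul_pow p x (n - 1)).const_mul (n * p)).neg.congr_deriv (by
    rw [Nat.cast_pred hn, Nat.sub_sub]
    ring)

lemma isWilliamsonGenerator_one_sub_mul_pow {p : ℝ} (hp0 : 0 ≤ p) (hp1 : p ≤ 1) {n : ℕ}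
    (hn : 1 ≤ n) :
    IsWilliamsonGenerator (fun x ↦ (1 - p * x) ^ n) (fun x ↦ -(n * p * (1 - p * x) ^ (n - 1)))
      (fun x ↦ p ^ 2 * n * (n - 1) * (1 - p * x) ^ (n - 2)) where
  continuousOn := by fun_prop
  continuousOn_deriv := by fun_prop
  hasDerivAt x _ := hasDerivAt_one_sub_mul_pow p x n
  hasDerivAt_deriv x _ := hasDerivAt_neg_mul_one_sub_mul_pow p x hn
  apply_one_nonneg := pow_nonneg (by linarith) n
  deriv_apply_one_nonpos := neg_nonpos.2 (mul_nonneg (by positivity) (pow_nonneg (by linarith) _))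
  deriv_deriv_nonneg x hx := by
    have hpx : 0 ≤ 1 - p * x := sub_nonneg.2 (mul_le_one₀ hp1 hx.1.le hx.2.le)
    have hn' : (0 : ℝ) ≤ n - 1 := sub_nonneg.2 (mod_cast hn)
    positivity

lemma kendallInverse_one_sub_mul_pow (α p : ℝ) (n : ℕ) :
    kendallInverse α (fun x ↦ (1 - p * x) ^ n) (fun x ↦ -(n * p * (1 - p * x) ^ (n - 1)))
        (fun x ↦ p ^ 2 * n * (n - 1) * (1 - p * x) ^ (n - 2))
      = ENNReal.ofReal ((1 - p) ^ n) • Measure.dirac (0 : ℝ)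
        + ENNReal.ofReal (n * p * (1 - p) ^ (n - 1)) • Measure.dirac (1 : ℝ)
        + (volume.restrict (Ioi (1 : ℝ))).withDensity
            (fun t => ENNReal.ofReal
              (α * p ^ 2 * n * (n - 1) * t ^ (-(2 * α) - 1) * (1 - p * t ^ (-α)) ^ (n - 2))) := by
  have hdens (u : ℝ) : kendallDensity α (fun x ↦ p ^ 2 * n * (n - 1) * (1 - p * x) ^ (n - 2)) u
      = α * p ^ 2 * n * (n - 1) * u ^ (-(2 * α) - 1) * (1 - p * u ^ (-α)) ^ (n - 2) := by
    rw [kendallDensity]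
    ring
  simp only [kendallInverse, hdens, mul_one, neg_neg]

end Bernoulli

/-- The n-fold Kendall convolution power of the Bernoulli measure `p δ_1 + (1-p) δ_0`:
the measure `(1-p)^n δ_0 + np(1-p)^{n-1} δ_1 + λ_n`, where `λ_n` has density
`α p² n(n-1) t^{-2α-1} (1 - p t^{-α})^{n-2}` on `(1,∞)`, is a probability measure whose
Kendall transform is `(p(1-t^α)_+ + 1 - p)^n`. -/
theorem kendall_bernoulli_power (α p : ℝ) (hα : 0 < α) (hp0 : 0 ≤ p) (hp1 : p ≤ 1)
    (n : ℕ) (hn : 2 ≤ n) :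
    IsProbabilityMeasure
      (ENNReal.ofReal ((1 - p) ^ n) • Measure.dirac (0 : ℝ)
        + ENNReal.ofReal (n * p * (1 - p) ^ (n - 1)) • Measure.dirac (1 : ℝ)
        + (volume.restrict (Set.Ioi (1 : ℝ))).withDensity
            (fun t => ENNReal.ofReal
              (α * p ^ 2 * n * (n - 1) * t ^ (-(2 * α) - 1) * (1 - p * t ^ (-α)) ^ (n - 2)))) ∧
    ∀ t : ℝ, 0 ≤ t →
      ∫ u, max (1 - (u * t) ^ α) 0
          ∂(ENNReal.ofReal ((1 - p) ^ n) • Measure.dirac (0 : ℝ)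
            + ENNReal.ofReal (n * p * (1 - p) ^ (n - 1)) • Measure.dirac (1 : ℝ)
            + (volume.restrict (Set.Ioi (1 : ℝ))).withDensity
                (fun t => ENNReal.ofReal
                  (α * p ^ 2 * n * (n - 1) * t ^ (-(2 * α) - 1) * (1 - p * t ^ (-α)) ^ (n - 2))))
        = (p * max (1 - t ^ α) 0 + 1 - p) ^ n := by
  have hφ := isWilliamsonGenerator_one_sub_mul_pow hp0 hp1 (one_le_two.trans hn)
  rw [← kendallInverse_one_sub_mul_pow]
  refine ⟨isProbabilityMeasure_kendallInverse hα hφ (by simp), fun t ht ↦ ?_⟩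
  calc kendallTransform α _ t
    _ = (1 - p * min (t ^ α) 1) ^ n := kendallTransform_kendallInverse hα hφ ht
    _ = (p * (1 - min (t ^ α) 1) + 1 - p) ^ n := by ring
    _ = (p * max (1 - t ^ α) 0 + 1 - p) ^ n := by rw [← max_sub_sub_left, sub_self]
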